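/- arXiv:2406.11488 — 2 statements merged into one kernel-verified Lean document; each statement's English description precedes it below -/
import Mathlib

section
/- For every deterministic one-way parity automaton A with n states there exists a reversible two-way parity automaton A′ with at most 4n² states recognizing the same language, i.e., an infinite word w ∈ A^ω is accepted by A′ if and only if it is accepted by A. -/
namespace Paper

/-! ## Two-way parity automata and transducers over infinite words.

An infinite word over an alphabet `A` is a function `ℕ → A`.
A configuration `⊢ u p v` with `w = u v` is encoded as a pair `(p, |u|) : Q × ℕ`.
The left end-marker `⊢` is encoded as `(none : Option A)`. -/

/-- A two-way automaton (without acceptance condition): states `Q` partitioned into forward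
states (`fwd`) and backward states, an initial forward state, and a transition relation `Δ`
over `Q × (A ∪ {⊢}) × Q` where transitions on the end-marker `⊢` (encoded `none`) go from
backward to forward states. -/
structure TwoWayAut (A : Type) where
  Q : Type
  finQ : Fintype Q
  fwd : Q → Prop
  init : Q
  init_fwd : fwd init
  Δ : Set (Q × Option A × Q)
  marker : ∀ p q, (p, (none : Option A), q) ∈ Δ → ¬ fwd p ∧ fwd q

attribute [instance] TwoWayAut.finQ

variable {A B : Type}

/-- `StepVia M w c t c'` : from configuration `c`, using transition `t`, the automaton `M`
reaches the successor configuration `c'` on input word `w`. -/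
def StepVia (M : TwoWayAut A) (w : ℕ → A) (c : M.Q × ℕ)
    (t : M.Q × Option A × M.Q) (c' : M.Q × ℕ) : Prop :=
  t ∈ M.Δ ∧ t.1 = c.1 ∧ t.2.2 = c'.1 ∧
    ((M.fwd c.1 ∧ t.2.1 = some (w c.2) ∧
        ((M.fwd c'.1 ∧ c'.2 = c.2 + 1) ∨ (¬ M.fwd c'.1 ∧ c'.2 = c.2))) ∨
     (¬ M.fwd c.1 ∧ 0 < c.2 ∧ t.2.1 = some (w (c.2 - 1)) ∧
        ((M.fwd c'.1 ∧ c'.2 = c.2) ∨ (¬ M.fwd c'.1 ∧ c'.2 = c.2 - 1))) ∨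
     (¬ M.fwd c.1 ∧ c.2 = 0 ∧ t.2.1 = none ∧ c'.2 = 0))

/-- The successor relation on configurations. -/
def Step (M : TwoWayAut A) (w : ℕ → A) (c c' : M.Q × ℕ) : Prop :=
  ∃ t, StepVia M w c t c'

/-- An infinite run of `M` on `w`, given by its configurations and the transitions taken. -/
def IsRun (M : TwoWayAut A) (w : ℕ → A) (cfg : ℕ → M.Q × ℕ)
    (tr : ℕ → M.Q × Option A × M.Q) : Prop :=
  cfg 0 = (M.init, 0) ∧ ∀ i, StepVia M w (cfg i) (tr i) (cfg (i + 1))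

/-- The run reads the whole word: the prefix lengths are unbounded. -/
def ReadsWhole (M : TwoWayAut A) (cfg : ℕ → M.Q × ℕ) : Prop :=
  ∀ n : ℕ, ∃ i, n ≤ (cfg i).2

/-- `t` occurs infinitely often in the sequence `tr`. -/
def InfOften {T : Type} (tr : ℕ → T) (t : T) : Prop :=
  ∀ n, ∃ i, n ≤ i ∧ tr i = t

def Deterministic (M : TwoWayAut A) : Prop :=
  ∀ p a q q', (p, a, q) ∈ M.Δ → (p, a, q') ∈ M.Δ → q = q'

def Codeterministic (M : TwoWayAut A) : Prop :=
  ∀ p p' a q, (p, a, q) ∈ M.Δ → (p', a, q) ∈ M.Δ → p = p'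

def Reversible (M : TwoWayAut A) : Prop :=
  Deterministic M ∧ Codeterministic M

def Oneway (M : TwoWayAut A) : Prop := ∀ q, M.fwd q

/-- A two-way parity automaton: a two-way automaton together with a finite family of
coloring functions (indexed by `CIdx`). -/
structure ParityAut (A : Type) extends TwoWayAut A where
  CIdx : Type
  finC : Fintype CIdx
  color : CIdx → (Q × Option A × Q) → ℕ

attribute [instance] ParityAut.finC

/-- The parity acceptance condition: for every coloring function, the minimal color of the
transitions taken infinitely often is even. -/
def ParityCond (M : ParityAut A) (tr : ℕ → M.Q × Option A × M.Q) : Prop :=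
  ∀ c : M.CIdx, Even (sInf {m : ℕ | ∃ t, InfOften tr t ∧ M.color c t = m})

/-- Acceptance of an infinite word by a two-way parity automaton. -/
def ParityAut.Accepts (M : ParityAut A) (w : ℕ → A) : Prop :=
  ∃ cfg tr, IsRun M.toTwoWayAut w cfg tr ∧ ReadsWhole M.toTwoWayAut cfg ∧ ParityCond M tr

/-- All colors of `M` (on its transitions) belong to `{0, …, ℓ-1}`. -/
def ColorsLt (M : ParityAut A) (ℓ : ℕ) : Prop :=
  ∀ (c : M.CIdx) t, t ∈ M.Δ → M.color c t < ℓ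

/-- `l` is a prefix of the infinite word `x`. -/
def IsPrefixOf {C : Type} (l : List C) (x : ℕ → C) : Prop :=
  ∀ (i : ℕ) (h : i < l.length), l.get ⟨i, h⟩ = x i

/-- Concatenation of the first `n` words of a sequence of finite words. -/
def prefixCat {C : Type} (f : ℕ → List C) : ℕ → List C
  | 0 => []
  | n + 1 => prefixCat f n ++ f n

/-- The concatenation of the sequence of finite words `f` is the infinite word `x`. -/
def FlattenTo {C : Type} (f : ℕ → List C) (x : ℕ → C) : Prop :=
  (∀ n, IsPrefixOf (prefixCat f n) x) ∧ ∀ m, ∃ n, m ≤ (prefixCat f n).length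

/-- A two-way parity transducer: a two-way parity automaton (whose underlying automaton is
required to be deterministic via hypotheses) together with an output function. -/
structure TwoWayTrans (A B : Type) extends ParityAut A where
  out : (Q × Option A × Q) → List B

/-- `T.Realizes w x` : the word `w` is accepted by (the deterministic transducer) `T`,
the produced output is infinite and equals `x`.  This is the graph of the partial function
`⟦T⟧ : A^ω ⇀ B^ω`. -/
def TwoWayTrans.Realizes (T : TwoWayTrans A B) (w : ℕ → A) (x : ℕ → B) : Prop :=
  ∃ cfg tr, IsRun T.toTwoWayAut w cfg tr ∧ ReadsWhole T.toTwoWayAut cfg ∧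
    ParityCond T.toParityAut tr ∧ FlattenTo (fun i => T.out (tr i)) x

/-- A two-way Büchi transducer: accepting transitions `acc` instead of coloring functions. -/
structure BuchiTrans (A B : Type) extends TwoWayAut A where
  acc : Set (Q × Option A × Q)
  out : (Q × Option A × Q) → List B

def BuchiTrans.Realizes (T : BuchiTrans A B) (w : ℕ → A) (x : ℕ → B) : Prop :=
  ∃ cfg tr, IsRun T.toTwoWayAut w cfg tr ∧ ReadsWhole T.toTwoWayAut cfg ∧
    (∀ n, ∃ i, n ≤ i ∧ tr i ∈ T.acc) ∧ FlattenTo (fun i => T.out (tr i)) x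

/-- A two-way transducer with no acceptance condition. -/
structure NoAccTrans (A B : Type) extends TwoWayAut A where
  out : (Q × Option A × Q) → List B

def NoAccTrans.Realizes (T : NoAccTrans A B) (w : ℕ → A) (x : ℕ → B) : Prop :=
  ∃ cfg tr, IsRun T.toTwoWayAut w cfg tr ∧ ReadsWhole T.toTwoWayAut cfg ∧
    FlattenTo (fun i => T.out (tr i)) x

/-! ## One-way parity automata, transducers, and copyless parity streaming string
transducers.  A one-way automaton has only forward states and never reads the end-marker,
so we use a simplified (equivalent) presentation. -/

structure OnewayAut (A : Type) where
  Q : Type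
  finQ : Fintype Q
  init : Q
  Δ : Set (Q × A × Q)
  CIdx : Type
  finC : Fintype CIdx
  color : CIdx → (Q × A × Q) → ℕ

attribute [instance] OnewayAut.finQ
attribute [instance] OnewayAut.finC

def OnewayDet (M : OnewayAut A) : Prop :=
  ∀ p a q q', (p, a, q) ∈ M.Δ → (p, a, q') ∈ M.Δ → q = q'

def OnewayRun (M : OnewayAut A) (w : ℕ → A) (s : ℕ → M.Q) : Prop :=
  s 0 = M.init ∧ ∀ i, (s i, w i, s (i + 1)) ∈ M.Δ

def OnewayParityCond (M : OnewayAut A) (tr : ℕ → M.Q × A × M.Q) : Prop :=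
  ∀ c : M.CIdx, Even (sInf {m : ℕ | ∃ t, InfOften tr t ∧ M.color c t = m})

def OnewayAut.Accepts (M : OnewayAut A) (w : ℕ → A) : Prop :=
  ∃ s, OnewayRun M w s ∧ OnewayParityCond M (fun i => (s i, w i, s (i + 1)))

def OnewayColorsLt (M : OnewayAut A) (ℓ : ℕ) : Prop :=
  ∀ (c : M.CIdx) t, t ∈ M.Δ → M.color c t < ℓ

/-- A one-way (deterministic) parity transducer. -/
structure OnewayTrans (A B : Type) extends OnewayAut A where
  out : (Q × A × Q) → List B

def OnewayTrans.Realizes (T : OnewayTrans A B) (w : ℕ → A) (x : ℕ → B) : Prop :=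
  ∃ s, OnewayRun T.toOnewayAut w s ∧
    OnewayParityCond T.toOnewayAut (fun i => (s i, w i, s (i + 1))) ∧
    FlattenTo (fun i => T.out (s i, w i, s (i + 1))) x

/-- Number of occurrences of `a` in the list `l` (classically). -/
noncomputable def occ {C : Type} (a : C) (l : List C) : ℕ :=
  l.countP fun x => @decide (x = a) (Classical.propDecidable _)

/-- A substitution `σ : R → (R ⊎ B)*` is copyless if every register occurs at most once in
the concatenation of all the `σ r'`. -/
def Copyless {R C : Type} [Fintype R] (σ : R → List (R ⊕ C)) : Prop :=
  ∀ r : R, (∑ r' : R, occ (Sum.inl r) (σ r')) ≤ 1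

/-- Applying an assignment `ν : R → B*` (extended to a morphism `(R ⊎ B)* → B*`). -/
def subApply {R C : Type} (ν : R → List C) : List (R ⊕ C) → List C
  | [] => []
  | Sum.inl r :: l => ν r ++ subApply ν l
  | Sum.inr b :: l => b :: subApply ν l

/-- A copyless parity streaming string transducer: a (deterministic) one-way parity
automaton with a finite set `R` of registers, a distinguished output register, and copyless
register updates, where the update of `outReg` always starts with `outReg`. -/
structure CPSST (A B : Type) extends OnewayAut A where
  R : Type
  finR : Fintype R
  outReg : R
  upd : (Q × A × Q) → R → List (R ⊕ B)
  copyless : ∀ t, @Copyless R B finR (upd t)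
  out_form : ∀ t, ∃ γ, upd t outReg = Sum.inl outReg :: γ

attribute [instance] CPSST.finR

/-- The register contents along a run: `ν_0 r = ε` and `ν_{i+1} = ν_i ∘ λ(t_i)`. -/
def regVal (T : CPSST A B) (w : ℕ → A) (s : ℕ → T.Q) : ℕ → T.R → List B
  | 0 => fun _ => []
  | i + 1 => fun r => subApply (regVal T w s i) (T.upd (s i, w i, s (i + 1)) r)

/-- `T.Realizes w x` : the (deterministic) CPSST `T` has an accepting run on `w` whose
output-register contents are unbounded with limit `x`. -/
def CPSST.Realizes (T : CPSST A B) (w : ℕ → A) (x : ℕ → B) : Prop :=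
  ∃ s, OnewayRun T.toOnewayAut w s ∧
    OnewayParityCond T.toOnewayAut (fun i => (s i, w i, s (i + 1))) ∧
    (∀ i, IsPrefixOf (regVal T w s i T.outReg) x) ∧
    (∀ m, ∃ i, m ≤ (regVal T w s i T.outReg).length)

/-- The one-way parity transducer with the same underlying automaton as the CPSST `T`,
which outputs on each transition the (copyless) substitution that `T` applies. -/
def enrich (T : CPSST A B) :
    OnewayTrans A {σ : T.R → List (T.R ⊕ B) // Copyless σ} where
  toOnewayAut := T.toOnewayAut
  out := fun t => [⟨T.upd t, T.copyless t⟩]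

/-! ## Merging forests -/

/-- A merging forest on `(Q⁺ ⊎ Q⁻, χ, ℓ)`: a finite rooted forest (given by a `parent` map
with no cycles) whose leaves (childless nodes) are injectively labeled in `Q⁻` and carry a
`χ`-tuple of integers `< ℓ`, whose roots are injectively labeled in `Q⁺`, and in which every
unary node (exactly one child) is a root. -/
structure MForest (Qp Qm χ : Type) (ℓ : ℕ) where
  V : Type
  finV : Fintype V
  parent : V → Option V
  acyc : ∀ v : V, ¬ Relation.TransGen (fun a b => parent a = some b) v v
  leafLab : V → Qm
  rootLab : V → Qp
  tup : V → χ → ℕ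
  tup_lt : ∀ v, (∀ u, parent u ≠ some v) → ∀ c, tup v c < ℓ
  leaf_inj : ∀ u v, (∀ u', parent u' ≠ some u) → (∀ v', parent v' ≠ some v) →
    leafLab u = leafLab v → u = v
  root_inj : ∀ u v, parent u = none → parent v = none → rootLab u = rootLab v → u = v
  unary_root : ∀ v : V, (∃! u, parent u = some v) → parent v = none

attribute [instance] MForest.finV

/-- Isomorphism of merging forests: a bijection of the nodes commuting with `parent` and
preserving the leaf labels, the leaf tuples and the root labels. -/
def MFIso {Qp Qm χ : Type} {ℓ : ℕ} (F G : MForest Qp Qm χ ℓ) : Prop :=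
  ∃ e : F.V ≃ G.V,
    (∀ v, G.parent (e v) = Option.map e (F.parent v)) ∧
    (∀ v, (∀ u, F.parent u ≠ some v) →
      F.leafLab v = G.leafLab (e v) ∧ ∀ c, F.tup v c = G.tup (e v) c) ∧
    (∀ v, F.parent v = none → F.rootLab v = G.rootLab (e v))

end Paper

namespace Paper

/-!
The runs of a deterministic one-way automaton `M` on `w`, started in all states at all levels, form
a forest in which runs can only merge. If the run from the initial state is infinite, the runs that
merge with it form a tree, which this run cuts into a left and a right part. The states of the
two-way automaton are pairs of tokens, each a state of `M` with one of two sides: one token follows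
the outline of the left part and the other one that of the right part. A token climbs from the last
child on its side to the parent, swings from any other child to the next one on its side, which
turns it around, and turns around on a leaf. Each of these motions is a partial injection determined
by one letter. The tokens have to stay on the same level: when one of them turns around, the head
reverses and the other one retraces its steps.

A reversible run that cannot return to its start never repeats a configuration, so its positions
tend to infinity: the two-way automaton reads the whole word as soon as it never gets stuck. It
reaches level `n` for the first time with both tokens on the state of the run of `M`, so the colors
of this run can be recovered. Conversely, if `M` is stuck at level `n`, the tokens never leave the
finite tree below that level.
-/

section TwoWay

variable {A : Type} {M : TwoWayAut A} {w : ℕ → A} {c c' c₁ c₂ : M.Q × ℕ}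
  {t t₁ t₂ : M.Q × Option A × M.Q} {cfg : ℕ → M.Q × ℕ} {tr : ℕ → M.Q × Option A × M.Q}

/-- The letter to the left of position `i` of `⊢ w`; the end-marker `⊢` is `none`. -/
def letterBefore (w : ℕ → A) : ℕ → Option A
  | 0 => none
  | i + 1 => some (w i)

open Classical in
/-- The letter of `⊢ w` under the head: to its right in a forward state, to its left in a
backward state. -/
noncomputable def headLetter (M : TwoWayAut A) (w : ℕ → A) (c : M.Q × ℕ) : Option A :=
  if M.fwd c.1 then some (w c.2) else letterBefore w c.2

theorem headLetter_of_fwd (h : M.fwd c.1) : headLetter M w c = some (w c.2) := if_pos h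

theorem headLetter_of_not_fwd (h : ¬M.fwd c.1) : headLetter M w c = letterBefore w c.2 := if_neg h

/-- The head keeps its place when the direction changes, and otherwise crosses one letter in the
current direction. -/
def HeadMove (M : TwoWayAut A) (c c' : M.Q × ℕ) : Prop :=
  (M.fwd c.1 ∧ M.fwd c'.1 ∧ c'.2 = c.2 + 1) ∨ (¬M.fwd c.1 ∧ ¬M.fwd c'.1 ∧ c.2 = c'.2 + 1) ∨
    ((M.fwd c.1 ↔ ¬M.fwd c'.1) ∧ c'.2 = c.2)

theorem stepVia_iff :
    StepVia M w c t c' ↔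
      t = (c.1, headLetter M w c, c'.1) ∧ t ∈ M.Δ ∧ HeadMove M c c' := by
  obtain ⟨p, i⟩ := c
  obtain ⟨q, j⟩ := c'
  obtain ⟨p', x, q'⟩ := t
  have hmarker := M.marker p' q'
  by_cases hp : M.fwd p <;> by_cases hq : M.fwd q <;> cases i <;>
    simp only [StepVia, HeadMove, headLetter, letterBefore] <;> grind

theorem exists_stepVia {p q : M.Q} {i : ℕ} (h : (p, headLetter M w (p, i), q) ∈ M.Δ) :
    ∃ t j, StepVia M w (p, i) t (q, j) := by
  have hmarker := M.marker p q
  by_cases hp : M.fwd p <;> by_cases hq : M.fwd q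
  · exact ⟨_, i + 1, stepVia_iff.2 ⟨rfl, h, .inl ⟨hp, hq, rfl⟩⟩⟩
  · exact ⟨_, i, stepVia_iff.2 ⟨rfl, h, .inr (.inr ⟨iff_of_true hp hq, rfl⟩)⟩⟩
  · exact ⟨_, i, stepVia_iff.2 ⟨rfl, h, .inr (.inr ⟨iff_of_false hp (not_not.2 hq), rfl⟩)⟩⟩
  · cases i with
    | zero =>
      rw [headLetter_of_not_fwd hp] at h
      exact (hq (hmarker h).2).elim
    | succ i => exact ⟨_, i, stepVia_iff.2 ⟨rfl, h, .inr (.inl ⟨hp, hq, rfl⟩)⟩⟩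

/-- The target configuration determines the letter read, so codeterminism carries over from
transitions to configurations. -/
theorem StepVia.headLetter_eq (h : StepVia M w c t c') :
    (M.fwd c'.1 → headLetter M w c = letterBefore w c'.2) ∧
      (¬M.fwd c'.1 → headLetter M w c = some (w c'.2)) := by
  obtain ⟨rfl, hΔ, hmove⟩ := stepVia_iff.1 h
  obtain ⟨p, i⟩ := c
  obtain ⟨q, j⟩ := c'
  have hmarker := M.marker p q
  by_cases hp : M.fwd p <;> by_cases hq : M.fwd q <;> cases i <;>
    simp only [HeadMove, headLetter, letterBefore] at * <;> grind [letterBefore]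

theorem StepVia.left_unique (hM : Codeterministic M) (h₁ : StepVia M w c₁ t₁ c)
    (h₂ : StepVia M w c₂ t₂ c) : c₁ = c₂ := by
  have hread : headLetter M w c₁ = headLetter M w c₂ := by
    by_cases hc : M.fwd c.1
    · rw [h₁.headLetter_eq.1 hc, h₂.headLetter_eq.1 hc]
    · rw [h₁.headLetter_eq.2 hc, h₂.headLetter_eq.2 hc]
  obtain ⟨rfl, hΔ₁, hmove₁⟩ := stepVia_iff.1 h₁
  obtain ⟨rfl, hΔ₂, hmove₂⟩ := stepVia_iff.1 h₂
  have hstate : c₁.1 = c₂.1 := hM _ _ _ _ hΔ₁ (hread ▸ hΔ₂)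
  refine Prod.ext hstate ?_
  grind [HeadMove]

namespace IsRun

theorem injective (hM : Codeterministic M) (hinit : ∀ p, (p, none, M.init) ∉ M.Δ)
    (h : IsRun M w cfg tr) : Function.Injective cfg := by
  refine Function.Injective.of_lt_imp_ne fun i => ?_
  induction i with
  | zero =>
    rintro (_ | j) hj heq
    · exact hj.false
    · have hstep := h.2 j
      have hletter := hstep.headLetter_eq.1
      obtain ⟨htr, hΔ, -⟩ := stepVia_iff.1 hstep
      rw [← heq, h.1] at hletter htr
      exact hinit _ (hletter M.init_fwd ▸ htr ▸ hΔ)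
  | succ i ih =>
    rintro (_ | j) hj heq
    · exact Nat.not_lt_zero _ hj
    · exact ih j (Nat.lt_of_succ_lt_succ hj) ((h.2 i).left_unique hM (heq ▸ h.2 j))

theorem tendsto_pos (hM : Codeterministic M) (hinit : ∀ p, (p, none, M.init) ∉ M.Δ)
    (h : IsRun M w cfg tr) : Filter.Tendsto (fun k => (cfg k).2) Filter.atTop Filter.atTop := by
  have hsnd : Filter.Tendsto (Prod.snd : M.Q × ℕ → ℕ) Filter.cofinite Filter.cofinite :=
    Filter.Tendsto.cofinite_of_finite_preimage_singleton fun n =>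
      (Set.finite_univ.prod (Set.finite_singleton n)).subset fun x hx => ⟨trivial, hx⟩
  rw [← Nat.cofinite_eq_atTop]
  exact hsnd.comp (h.injective hM hinit).tendsto_cofinite

theorem pos_le (h : IsRun M w cfg tr) (k : ℕ) : (cfg k).2 ≤ k := by
  induction k with
  | zero => simp [h.1]
  | succ k ih =>
    obtain ⟨-, -, hmove⟩ := stepVia_iff.1 (h.2 k)
    grind [HeadMove]

theorem exists_first_visit (h : IsRun M w cfg tr) (hread : ReadsWhole M cfg) (n : ℕ) :
    ∃ k, (cfg k).2 = n ∧ M.fwd (cfg k).1 ∧ ∀ j < k, (cfg j).2 < n := by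
  classical
  obtain ⟨k, hk, hmin⟩ : ∃ k, n ≤ (cfg k).2 ∧ ∀ j < k, (cfg j).2 < n :=
    ⟨Nat.find (hread n), Nat.find_spec (hread n),
      fun j hj => not_le.1 (Nat.find_min (hread n) hj)⟩
  cases k with
  | zero =>
    rw [h.1] at hk
    exact ⟨0, by rw [h.1]; exact hk.antisymm' (Nat.zero_le n), h.1 ▸ M.init_fwd, hmin⟩
  | succ k =>
    have hlt := hmin k k.lt_succ_self
    obtain ⟨-, -, hmove⟩ := stepVia_iff.1 (h.2 k)
    rcases hmove with ⟨-, hfwd, hpos⟩ | ⟨-, -, hpos⟩ | ⟨-, hpos⟩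
    · exact ⟨k + 1, by lia, hfwd, hmin⟩
    · lia
    · lia

end IsRun

theorem infOften_iff_frequently {T : Type} {tr : ℕ → T} {t : T} :
    InfOften tr t ↔ ∃ᶠ i in Filter.atTop, tr i = t :=
  Filter.frequently_atTop.symm

theorem exists_infOften_of_frequently {S B : Type} [Finite S] {tr : ℕ → S × B × S} {b : B}
    {P : S × B × S → Prop} (h : ∃ᶠ i in Filter.atTop, (tr i).2.1 = b ∧ P (tr i)) :
    ∃ t, InfOften tr t ∧ P t := by
  have hends : ∃ᶠ i in Filter.atTop, ∃ e : S × S, tr i = (e.1, b, e.2) ∧ P (tr i) :=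
    h.mono fun i ⟨hb, hP⟩ => ⟨((tr i).1, (tr i).2.2), hb ▸ rfl, hP⟩
  obtain ⟨e, he⟩ := Filter.frequently_exists.1 hends
  obtain ⟨i, hi, hP⟩ := he.exists
  exact ⟨_, infOften_iff_frequently.2 (he.mono fun _ => And.left), hi ▸ hP⟩

theorem sInf_eq_sInf_of_forall_exists_le {T U : Type*} {P : T → Prop} {P' : U → Prop} {f : T → ℕ}
    {f' : U → ℕ} (h : ∀ t, P t → ∃ u, P' u ∧ f' u ≤ f t) (h' : ∀ u, P' u → ∃ t, P t ∧ f t ≤ f' u) :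
    sInf {m | ∃ t, P t ∧ f t = m} = sInf {m | ∃ u, P' u ∧ f' u = m} := by
  refine csInf_eq_csInf_of_forall_exists_le ?_ ?_
  · rintro _ ⟨t, ht, rfl⟩
    obtain ⟨u, hu, hle⟩ := h t ht
    exact ⟨_, ⟨u, hu, rfl⟩, hle⟩
  · rintro _ ⟨u, hu, rfl⟩
    obtain ⟨t, ht, hle⟩ := h' u hu
    exact ⟨_, ⟨t, ht, rfl⟩, hle⟩

theorem exists_seq_of_forall_exists {α : Type*} {I : ℕ → α → Prop} {r : ℕ → α → α → Prop} {a : α}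
    (h₀ : I 0 a) (h : ∀ n x, I n x → ∃ y, r n x y ∧ I (n + 1) y) :
    ∃ f : ℕ → α, f 0 = a ∧ ∀ n, r n (f n) (f (n + 1)) := by
  choose g hg using h
  let f : ∀ n, {x // I n x} := Nat.rec ⟨a, h₀⟩ fun n x => ⟨g n x x.2, (hg n x x.2).2⟩
  exact ⟨fun n => (f n).1, rfl, fun n => (hg n _ (f n).2).1⟩

end TwoWay

section Turn

variable {T : Type*} {R : T → T → Prop} {s s' : T × T}

/-- One member of a pair is moved along `R`, the first one if it can be. -/
inductive Turn (R : T → T → Prop) : T × T → T × T → Prop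
  | fst {t t' u : T} : R t t' → Turn R (t, u) (t', u)
  | snd {t u u' : T} : (∀ t', ¬R t t') → R u u' → Turn R (t, u) (t, u')

namespace Turn

theorem symm (hR : ∀ ⦃t t'⦄, R t t' → R t' t) (h : Turn R s s') : Turn R s' s := by
  cases h with
  | fst h => exact fst (hR h)
  | snd hfst h => exact snd hfst (hR h)

theorem rightUnique (hR : Relator.RightUnique R) : Relator.RightUnique (Turn R) := by
  rintro _ _ _ (h | ⟨hfst, h⟩) (h' | ⟨hfst', h'⟩)
  · rw [hR h h']
  · exact (hfst' _ h).elim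
  · exact (hfst _ h').elim
  · rw [hR h h']

theorem exists_rel (h : Turn R s s') : (∃ t, R s.1 t) ∨ ∃ t, R s.2 t := by
  cases h with
  | fst h => exact .inl ⟨_, h⟩
  | snd _ h => exact .inr ⟨_, h⟩

theorem exists_of_exists_rel (h : (∃ t, R s.1 t) ∨ ∃ t, R s.2 t) : ∃ s', Turn R s s' := by
  by_cases hfst : ∃ t, R s.1 t
  · exact hfst.elim fun t ht => ⟨_, fst ht⟩
  · exact (h.resolve_left hfst).elim fun t ht => ⟨_, snd (not_exists.1 hfst) ht⟩

theorem reflGen (h : Turn R s s') :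
    Relation.ReflGen R s.1 s'.1 ∧ Relation.ReflGen R s.2 s'.2 := by
  cases h with
  | fst h => exact ⟨.single h, .refl⟩
  | snd _ h => exact ⟨.refl, .single h⟩

end Turn

end Turn

section Token

/-- A token lies on a state and faces one of the two sides. -/
abbrev Token (Q : Type*) := Q × Bool

variable {Q : Type*} {E : Q → Q → Prop} {L : Q → Prop} {p q : Q} {t t' u : Token Q}

/-- The token turns around on a state of `L`. -/
def Flip (L : Q → Prop) (t t' : Token Q) : Prop := L t.1 ∧ t' = (t.1, !t.2)

theorem Flip.symm (h : Flip L t t') : Flip L t' t := by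
  obtain ⟨hL, rfl⟩ := h
  exact ⟨hL, by simp⟩

theorem Flip.rightUnique : Relator.RightUnique (Flip L) :=
  fun _ _ _ h h' => h.2.trans h'.2.symm

variable [Fintype Q]

/-- The rank of a state in a fixed enumeration for the side `true`, and in the opposite order for
the side `false`. -/
noncomputable def signedRank (b : Bool) (p : Q) : ℤ :=
  if b then (Fintype.equivFin Q p : ℤ) else -(Fintype.equivFin Q p : ℤ)

theorem signedRank_injective (b : Bool) : Function.Injective (signedRank (Q := Q) b) := by
  intro p q h
  refine (Fintype.equivFin Q).injective (Fin.ext ?_)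
  cases b <;> simpa [signedRank] using h

theorem signedRank_not (b : Bool) (p : Q) : signedRank (!b) p = -signedRank b p := by
  cases b <;> simp [signedRank]

/-- The token moves along an edge from the last sibling on its side to the common successor. -/
def Climb (E : Q → Q → Prop) (t t' : Token Q) : Prop :=
  E t.1 t'.1 ∧ t'.2 = t.2 ∧ ∀ r, E r t'.1 → signedRank t.2 r ≤ signedRank t.2 t.1

/-- The token moves to the next sibling on its side and turns around. -/
def Swing (E : Q → Q → Prop) (t t' : Token Q) : Prop :=
  t'.2 = (!t.2) ∧ ∃ q, E t.1 q ∧ E t'.1 q ∧ signedRank t.2 t.1 < signedRank t.2 t'.1 ∧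
    ∀ r, E r q → signedRank t.2 r ≤ signedRank t.2 t.1 ∨ signedRank t.2 t'.1 ≤ signedRank t.2 r

theorem Climb.rightUnique (hE : Relator.RightUnique E) : Relator.RightUnique (Climb E) :=
  fun _ _ _ h h' => Prod.ext (hE h.1 h'.1) (h.2.1.trans h'.2.1.symm)

theorem Climb.leftUnique : Relator.LeftUnique (Climb E) := by
  intro t u t' ht hu
  have hside : t.2 = u.2 := ht.2.1.symm.trans hu.2.1
  exact Prod.ext (signedRank_injective t.2
    (le_antisymm (hside ▸ hu.2.2 _ ht.1) (ht.2.2 _ hu.1))) hside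

theorem Swing.symm (h : Swing E t t') : Swing E t' t := by
  obtain ⟨hb, q, ht, ht', hlt, hnext⟩ := h
  refine ⟨by simp [hb], q, ht', ht, ?_, fun r hr => ?_⟩
  · rw [hb, signedRank_not, signedRank_not]
    lia
  · have := hnext r hr
    rw [hb, signedRank_not, signedRank_not, signedRank_not]
    lia

theorem Swing.rightUnique (hE : Relator.RightUnique E) : Relator.RightUnique (Swing E) := by
  rintro t u u' ⟨hb, q, ht, hu, hlt, hnext⟩ ⟨hb', q', ht', hu', hlt', hnext'⟩
  obtain rfl := hE ht ht'
  refine Prod.ext (signedRank_injective t.2 (le_antisymm ?_ ?_)) (hb.trans hb'.symm)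
  · exact (hnext _ hu').resolve_left hlt'.not_ge
  · exact (hnext' _ hu).resolve_left hlt.not_ge

theorem Climb.not_swing (hE : Relator.RightUnique E) (h : Climb E t t') : ¬Swing E t u := by
  rintro ⟨-, q, ht, hu, hlt, -⟩
  obtain rfl := hE h.1 ht
  exact (h.2.2 _ hu).not_gt hlt

theorem exists_climb_or_exists_swing (b : Bool) (h : E p q) :
    (∃ t, Climb E (p, b) t) ∨ ∃ t, Swing E (p, b) t := by
  by_cases hlast : ∀ r, E r q → signedRank b r ≤ signedRank b p
  · exact .inl ⟨(q, b), h, rfl, hlast⟩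
  · push Not at hlast
    obtain ⟨r, ⟨hrq, hpr⟩, hmin⟩ := Set.exists_min_image
      {r | E r q ∧ signedRank b p < signedRank b r} (signedRank b) (Set.toFinite _) hlast
    refine .inr ⟨(r, !b), rfl, q, h, hrq, hpr, fun r' hr' => ?_⟩
    exact (le_or_gt (signedRank b r') (signedRank b p)).imp_right fun hlt => hmin r' ⟨hr', hlt⟩

theorem exists_climb_to (b : Bool) (h : E p q) : ∃ t, Climb E t (q, b) :=
  have ⟨r, hr, hmax⟩ := Set.exists_max_image {r | E r q} (signedRank b) (Set.toFinite _) ⟨p, h⟩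
  ⟨(r, b), hr, rfl, hmax⟩

end Token

namespace OnewayAut

variable {A : Type}

section Outline

variable (M : OnewayAut A)

/-- The edges between consecutive levels of the run forest of `M`, over the letter `a`. -/
def Edge (a : A) (p q : M.Q) : Prop := (p, a, q) ∈ M.Δ

/-- A state without predecessor in the run forest, according to the letter on its left: over `⊢`
only the initial state is rooted. -/
def IsLeaf : Option A → M.Q → Prop
  | none, p => p ≠ M.init
  | some a, p => ∀ r, ¬M.Edge a r p

/-- A pair of tokens; this is a state of the outline automaton. -/
abbrev TokenPair := Token M.Q × Token M.Q

variable {M} {s s' : M.TokenPair} {a : A} {x : Option A}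

/-- The tokens move to the right while they face different sides. -/
def IsForward (s : M.TokenPair) : Prop := s.1.2 ≠ s.2.2

/-- The moves of a forward pair: both tokens climb unless one of them has to swing. -/
inductive Ascent : Option A → M.TokenPair → M.TokenPair → Prop
  | climb {a : A} {s s' : M.TokenPair} : Climb (M.Edge a) s.1 s'.1 → Climb (M.Edge a) s.2 s'.2 →
      Ascent (some a) s s'
  | swing {a : A} {s s' : M.TokenPair} : Turn (Swing (M.Edge a)) s s' → Ascent (some a) s s'

/-- The moves of a backward pair: both tokens descend unless one of them is on a leaf. -/
inductive Descent : Option A → M.TokenPair → M.TokenPair → Prop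
  | descend {a : A} {s s' : M.TokenPair} : Climb (M.Edge a) s'.1 s.1 →
      Climb (M.Edge a) s'.2 s.2 → Descent (some a) s s'
  | flip {x : Option A} {s s' : M.TokenPair} : Turn (Flip (M.IsLeaf x)) s s' → Descent x s s'

/-- The transitions of the outline automaton, on a letter or on the end-marker `none`. -/
def OutlineMove (x : Option A) (s s' : M.TokenPair) : Prop :=
  (IsForward s → Ascent x s s') ∧ (¬IsForward s → Descent x s s')

theorem Edge.rightUnique (hM : OnewayDet M) (a : A) : Relator.RightUnique (M.Edge a) :=
  fun _ _ _ => hM _ _ _ _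

theorem isForward_of_climb (h₁ : Climb (M.Edge a) s.1 s'.1) (h₂ : Climb (M.Edge a) s.2 s'.2) :
    IsForward s' ↔ IsForward s := by
  rw [IsForward, IsForward, h₁.2.1, h₂.2.1]

theorem isForward_of_turn {R : Token M.Q → Token M.Q → Prop}
    (hR : ∀ ⦃t t'⦄, R t t' → t'.2 = !t.2) (h : Turn R s s') : IsForward s' ↔ ¬IsForward s := by
  cases h with
  | fst h => simp [IsForward, hR h, Bool.eq_not_iff]
  | snd _ h => simp [IsForward, hR h, Bool.eq_not_iff]

theorem isForward_of_swing (h : Turn (Swing (M.Edge a)) s s') : IsForward s' ↔ ¬IsForward s :=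
  isForward_of_turn (fun _ _ h => h.1) h

theorem isForward_of_flip (h : Turn (Flip (M.IsLeaf x)) s s') : IsForward s' ↔ ¬IsForward s :=
  isForward_of_turn (fun _ _ h => by rw [h.2]) h

theorem Ascent.rightUnique (hM : OnewayDet M) (x : Option A) :
    Relator.RightUnique (Ascent (M := M) x) := by
  have climb_not_swing {a : A} {s s' s'' : M.TokenPair} (h₁ : Climb (M.Edge a) s.1 s'.1)
      (h₂ : Climb (M.Edge a) s.2 s'.2) : ¬Turn (Swing (M.Edge a)) s s'' := fun h =>
    h.exists_rel.elim (fun ⟨_, h⟩ => h₁.not_swing (Edge.rightUnique hM a) h)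
      fun ⟨_, h⟩ => h₂.not_swing (Edge.rightUnique hM a) h
  rintro s s' s'' (⟨h₁, h₂⟩ | h) (⟨h₁', h₂'⟩ | h')
  · exact Prod.ext (Climb.rightUnique (Edge.rightUnique hM _) h₁ h₁')
      (Climb.rightUnique (Edge.rightUnique hM _) h₂ h₂')
  · exact (climb_not_swing h₁ h₂ h').elim
  · exact (climb_not_swing h₁' h₂' h).elim
  · exact Turn.rightUnique (Swing.rightUnique (Edge.rightUnique hM _)) h h'

theorem Descent.rightUnique (x : Option A) : Relator.RightUnique (Descent (M := M) x) := by
  have descend_not_flip {a : A} {s s' s'' : M.TokenPair} (h₁ : Climb (M.Edge a) s'.1 s.1)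
      (h₂ : Climb (M.Edge a) s'.2 s.2) : ¬Turn (Flip (M.IsLeaf (some a))) s s'' := fun h =>
    h.exists_rel.elim (fun ⟨_, h⟩ => h.1 _ h₁.1) fun ⟨_, h⟩ => h.1 _ h₂.1
  rintro s s' s'' (⟨h₁, h₂⟩ | h) (⟨h₁', h₂'⟩ | h')
  · exact Prod.ext (Climb.leftUnique h₁ h₁') (Climb.leftUnique h₂ h₂')
  · exact (descend_not_flip h₁ h₂ h').elim
  · exact (descend_not_flip h₁' h₂' h).elim
  · exact Turn.rightUnique Flip.rightUnique h h'

theorem OutlineMove.rightUnique (hM : OnewayDet M) (x : Option A) :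
    Relator.RightUnique (OutlineMove (M := M) x) := by
  intro s s' s'' h h'
  by_cases hs : IsForward s
  · exact Ascent.rightUnique hM x (h.1 hs) (h'.1 hs)
  · exact Descent.rightUnique x (h.2 hs) (h'.2 hs)

theorem OutlineMove.symm (h : OutlineMove x s s') :
    (IsForward s' → Descent x s' s) ∧ (¬IsForward s' → Ascent x s' s) := by
  by_cases hs : IsForward s
  · cases h.1 hs with
    | climb h₁ h₂ =>
      exact ⟨fun _ => .descend h₁ h₂, fun hs' => (hs' ((isForward_of_climb h₁ h₂).2 hs)).elim⟩
    | swing h =>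
      exact ⟨fun hs' => ((isForward_of_swing h).1 hs' hs).elim,
        fun _ => .swing (h.symm fun _ _ => Swing.symm)⟩
  · cases h.2 hs with
    | descend h₁ h₂ =>
      exact ⟨fun hs' => (hs ((isForward_of_climb h₁ h₂).2 hs')).elim, fun _ => .climb h₁ h₂⟩
    | flip h =>
      exact ⟨fun _ => .flip (h.symm fun _ _ => Flip.symm),
        fun hs' => (hs' ((isForward_of_flip h).2 hs)).elim⟩

theorem OutlineMove.leftUnique (hM : OnewayDet M) (x : Option A) :
    Relator.LeftUnique (OutlineMove (M := M) x) := by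
  intro s s' s'' h h'
  by_cases hs : IsForward s''
  · exact Descent.rightUnique x (h.symm.1 hs) (h'.symm.1 hs)
  · exact Ascent.rightUnique hM x (h.symm.2 hs) (h'.symm.2 hs)

theorem OutlineMove.not_isForward_and_isForward (h : OutlineMove none s s') :
    ¬IsForward s ∧ IsForward s' := by
  have hs : ¬IsForward s := fun hs => nomatch h.1 hs
  cases h.2 hs with
  | flip h => exact ⟨hs, (isForward_of_flip h).2 hs⟩

variable (M) in
/-- The outline automaton of `M`, which moves two tokens along the left and right outlines of the
part of the run forest that is connected to the initial state. -/
abbrev outlineAut : TwoWayAut A where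
  Q := M.TokenPair
  finQ := inferInstance
  fwd := IsForward
  init := ((M.init, false), (M.init, true))
  init_fwd := Bool.false_ne_true
  Δ := {t | OutlineMove t.2.1 t.1 t.2.2}
  marker _ _ h := h.not_isForward_and_isForward

theorem reversible_outlineAut (hM : OnewayDet M) : Reversible M.outlineAut :=
  ⟨fun _ _ _ _ h h' => OutlineMove.rightUnique hM _ h h',
    fun _ _ _ _ h h' => OutlineMove.leftUnique hM _ h h'⟩

theorem marker_init_not_mem_outlineAut (s : M.TokenPair) :
    (s, none, M.outlineAut.init) ∉ M.outlineAut.Δ := by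
  intro h
  cases (OutlineMove.symm h).1 M.outlineAut.init_fwd with
  | flip h => exact h.exists_rel.elim (fun ⟨_, h⟩ => h.1 rfl) fun ⟨_, h⟩ => h.1 rfl

open Classical in
/-- The color of a transition over `a` from a pair of tokens on one state is the color of the
transition of `M` over `a` from this state. Tokens on different states say nothing about the run
of `M`, and the largest color over `a` then does not lower the minimum. -/
noncomputable def outlineColor (c : M.CIdx) : M.TokenPair × Option A × M.TokenPair → ℕ
  | (_, none, _) => 0
  | (s, some a, _) =>
    {e : M.Q × M.Q | M.Edge a e.1 e.2 ∧ (s.1.1 = s.2.1 → e.1 = s.1.1)}.toFinset.sup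
      fun e => M.color c (e.1, a, e.2)

theorem color_le_outlineColor (c : M.CIdx) {p q : M.Q} (h : M.Edge a p q)
    (hp : s.1.1 = s.2.1 → p = s.1.1) : M.color c (p, a, q) ≤ outlineColor c (s, some a, s') := by
  classical
  exact Finset.le_sup (f := fun e : M.Q × M.Q => M.color c (e.1, a, e.2)) (b := (p, q))
    (Set.mem_toFinset.2 ⟨h, hp⟩)

theorem outlineColor_le (hM : OnewayDet M) (c : M.CIdx) {p q : M.Q} (h : M.Edge a p q)
    (h₁ : s.1.1 = p) (h₂ : s.2.1 = p) : outlineColor c (s, some a, s') ≤ M.color c (p, a, q) := by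
  classical
  refine Finset.sup_le fun e he => ?_
  obtain ⟨hedge, he⟩ := Set.mem_toFinset.1 he
  have hp : e.1 = p := (he (h₁.trans h₂.symm)).trans h₁
  have hq : e.2 = q := hM _ _ _ _ hedge (hp ▸ h)
  rw [hp, hq]

variable (M) in
/-- The outline automaton of `M` with the colors inherited from `M`. -/
noncomputable abbrev outline : ParityAut A where
  toTwoWayAut := M.outlineAut
  CIdx := M.CIdx
  finC := inferInstance
  color := outlineColor

theorem card_outline : Fintype.card M.outline.Q = 4 * Fintype.card M.Q ^ 2 := by
  simp only [Fintype.card_prod, Fintype.card_bool]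
  ring

end Outline

section TokenMove

variable {M : OnewayAut A} {w : ℕ → A} {t t' : Token M.Q} {i j n : ℕ} {p p' q r : M.Q}
  {cfg : ℕ → M.TokenPair × ℕ} {tr : ℕ → M.TokenPair × Option A × M.TokenPair} {s : ℕ → M.Q}

variable (M w) in
/-- The motion of a single token, from level `i` to level `j` of the run forest of `M` on `w`,
during a transition of the outline automaton. -/
inductive TokenMove : ℕ → Token M.Q → ℕ → Token M.Q → Prop
  | climb {i : ℕ} {t t' : Token M.Q} : Climb (M.Edge (w i)) t t' → TokenMove i t (i + 1) t'
  | descend {i : ℕ} {t t' : Token M.Q} : Climb (M.Edge (w i)) t' t → TokenMove (i + 1) t i t'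
  | swing {i : ℕ} {t t' : Token M.Q} : Swing (M.Edge (w i)) t t' → TokenMove i t i t'
  | flip {i : ℕ} {t t' : Token M.Q} :
      Flip (M.IsLeaf (letterBefore w i)) t t' → TokenMove i t i t'
  | stay {i : ℕ} {t : Token M.Q} : TokenMove i t i t

theorem TokenMove.of_reflGen {R : Token M.Q → Token M.Q → Prop} (h : Relation.ReflGen R t t')
    (hR : ∀ ⦃t t'⦄, R t t' → TokenMove M w i t i t') : TokenMove M w i t i t' := by
  cases h with
  | refl => exact stay
  | single h => exact hR h

theorem TokenMove.of_stepVia {c c' : M.TokenPair × ℕ} {d : M.TokenPair × Option A × M.TokenPair}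
    (h : StepVia M.outlineAut w c d c') :
    TokenMove M w c.2 c.1.1 c'.2 c'.1.1 ∧ TokenMove M w c.2 c.1.2 c'.2 c'.1.2 := by
  obtain ⟨s, i⟩ := c
  obtain ⟨s', j⟩ := c'
  obtain ⟨rfl, hmove, hhead⟩ := stepVia_iff.1 h
  by_cases hs : IsForward s
  · have hascent := hmove.1 hs
    rw [headLetter_of_fwd hs] at hascent
    cases hascent with
    | climb h₁ h₂ =>
      obtain rfl : j = i + 1 := by grind [HeadMove, isForward_of_climb h₁ h₂]
      exact ⟨.climb h₁, .climb h₂⟩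
    | swing h =>
      obtain rfl : j = i := by grind [HeadMove, isForward_of_swing h]
      exact h.reflGen.imp (of_reflGen · fun _ _ => .swing) (of_reflGen · fun _ _ => .swing)
  · have hdescent := hmove.2 hs
    rw [headLetter_of_not_fwd hs] at hdescent
    generalize hx : letterBefore w i = x at hdescent
    cases hdescent with
    | descend h₁ h₂ =>
      obtain rfl : i = j + 1 := by grind [HeadMove, isForward_of_climb h₁ h₂]
      obtain rfl := Option.some.inj hx
      exact ⟨.descend h₁, .descend h₂⟩
    | flip h =>
      obtain rfl : j = i := by grind [HeadMove, isForward_of_flip h]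
      subst hx
      exact h.reflGen.imp (of_reflGen · fun _ _ => .flip) (of_reflGen · fun _ _ => .flip)

variable (M w) in
/-- The run of `M` on `w` from state `p` at level `i` is in state `q` at level `n`. -/
inductive Reaches (n : ℕ) (q : M.Q) : ℕ → M.Q → Prop
  | refl : Reaches n q n q
  | step {i : ℕ} {p p' : M.Q} : M.Edge (w i) p p' → Reaches n q (i + 1) p' → Reaches n q i p

namespace Reaches

theorem le (h : Reaches M w n q i p) : i ≤ n := by
  induction h with
  | refl => exact le_rfl
  | step _ _ ih => exact Nat.le_of_succ_le ih

theorem eq (h : Reaches M w n q n p) : p = q := by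
  cases h with
  | refl => rfl
  | step _ h => exact (Nat.not_succ_le_self n h.le).elim

theorem snoc (h : Reaches M w n q i p) (hr : M.Edge (w n) q r) : Reaches M w (n + 1) r i p := by
  induction h with
  | refl => exact .step hr .refl
  | step hp _ ih => exact .step hp ih

theorem tail (hM : OnewayDet M) (hstuck : i = n → ∀ r, ¬M.Edge (w n) q r)
    (h : Reaches M w n q i p) (hp : M.Edge (w i) p p') : Reaches M w n q (i + 1) p' := by
  cases h with
  | refl => exact (hstuck rfl _ hp).elim
  | step hp' h => exact Edge.rightUnique hM _ hp' hp ▸ h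

theorem tokenMove (hM : OnewayDet M) (hstuck : i = n → ∀ r, ¬M.Edge (w n) q r)
    (h : Reaches M w n q i t.1) (hmove : TokenMove M w i t j t') : Reaches M w n q j t'.1 := by
  cases hmove with
  | climb hclimb => exact h.tail hM hstuck hclimb.1
  | descend hclimb => exact .step hclimb.1 h
  | swing hswing =>
    obtain ⟨-, r, hr, hr', -⟩ := hswing
    exact .step hr' (h.tail hM hstuck hr)
  | flip hflip => exact hflip.2 ▸ h
  | stay => exact h

theorem of_onewayRun (hs : OnewayRun M w s) (n : ℕ) : Reaches M w n (s n) 0 M.init := by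
  induction n with
  | zero => exact hs.1 ▸ refl
  | succ n ih => exact ih.snoc (hs.2 n)

theorem of_isRun (hM : OnewayDet M) (h : IsRun M.outlineAut w cfg tr)
    (hq : Reaches M w n q 0 M.init) (k : ℕ)
    (hstuck : ∀ j < k, (cfg j).2 = n → ∀ r, ¬M.Edge (w n) q r) :
    Reaches M w n q (cfg k).2 (cfg k).1.1.1 ∧ Reaches M w n q (cfg k).2 (cfg k).1.2.1 := by
  induction k with
  | zero =>
    rw [h.1]
    exact ⟨hq, hq⟩
  | succ k ih =>
    have hmoves := TokenMove.of_stepVia (h.2 k)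
    have hreach := ih fun j hj => hstuck j (Nat.lt_succ_of_lt hj)
    have hstuckk := hstuck k k.lt_succ_self
    exact ⟨hreach.1.tokenMove hM hstuckk hmoves.1, hreach.2.tokenMove hM hstuckk hmoves.2⟩

end Reaches

theorem exists_onewayRun_of_isRun (hM : OnewayDet M) (h : IsRun M.outlineAut w cfg tr)
    (hread : ReadsWhole M.outlineAut cfg) : ∃ s, OnewayRun M w s := by
  refine exists_seq_of_forall_exists (I := fun n q => Reaches M w n q 0 M.init)
    (r := fun n => M.Edge (w n)) .refl fun n q hq => ?_
  suffices ∃ r, M.Edge (w n) q r from this.imp fun r hr => ⟨hr, hq.snoc hr⟩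
  by_contra! hstuck
  obtain ⟨k, hk⟩ := hread (n + 1)
  exact Nat.not_succ_le_self n (hk.trans (hq.of_isRun hM h k fun _ _ _ => hstuck).1.le)

theorem exists_visit (hM : OnewayDet M) (h : IsRun M.outlineAut w cfg tr)
    (hread : ReadsWhole M.outlineAut cfg) (hs : OnewayRun M w s) (n : ℕ) :
    ∃ k, (cfg k).2 = n ∧ IsForward (cfg k).1 ∧ (cfg k).1.1.1 = s n ∧ (cfg k).1.2.1 = s n := by
  obtain ⟨k, rfl, hfwd, hlt⟩ := h.exists_first_visit hread n
  obtain ⟨h₁, h₂⟩ := (Reaches.of_onewayRun hs _).of_isRun hM h k fun j hj heq =>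
    ((hlt j hj).ne heq).elim
  exact ⟨k, rfl, hfwd, h₁.eq, h₂.eq⟩

end TokenMove

section Outlines

variable {M : OnewayAut A} {w : ℕ → A} {s : ℕ → M.Q} {σ : Bool} {i j : ℕ} {p q : M.Q}
  {t t' u : Token M.Q} {c c' : M.TokenPair × ℕ} {d : M.TokenPair × Option A × M.TokenPair}

variable (M w s) in
/-- The run of `M` on `w` from state `p` at level `i` merges with the run `s` from the side `σ`. -/
inductive SideBranch (σ : Bool) : ℕ → M.Q → Prop
  | merge {i : ℕ} {p : M.Q} : M.Edge (w i) p (s (i + 1)) →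
      signedRank σ (s i) < signedRank σ p → SideBranch σ i p
  | step {i : ℕ} {p p' : M.Q} : M.Edge (w i) p p' → SideBranch σ (i + 1) p' → SideBranch σ i p

theorem sideBranch_iff (hM : OnewayDet M) (h : M.Edge (w i) p q) :
    SideBranch M w s σ i p ↔
      (q = s (i + 1) ∧ signedRank σ (s i) < signedRank σ p) ∨ SideBranch M w s σ (i + 1) q := by
  constructor
  · rintro (⟨hp, hlt⟩ | ⟨hp, hp'⟩)
    · exact .inl ⟨Edge.rightUnique hM _ h hp, hlt⟩
    · exact .inr (Edge.rightUnique hM _ hp h ▸ hp')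
  · rintro (⟨rfl, hlt⟩ | hq)
    · exact .merge h hlt
    · exact .step h hq

theorem SideBranch.ne (hM : OnewayDet M) (hs : OnewayRun M w s) (h : SideBranch M w s σ i p) :
    p ≠ s i := by
  induction h with
  | merge _ hlt =>
    rintro rfl
    exact hlt.false
  | step hp _ ih =>
    rintro rfl
    exact ih (Edge.rightUnique hM _ hp (hs.2 _))

theorem SideBranch.not_sideBranch_not (hM : OnewayDet M) (hs : OnewayRun M w s)
    (h : SideBranch M w s σ i p) : ¬SideBranch M w s (!σ) i p := by
  induction h with
  | merge hp hlt =>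
    rw [sideBranch_iff hM hp, signedRank_not, signedRank_not]
    rintro (⟨-, hlt'⟩ | h)
    · lia
    · exact h.ne hM hs rfl
  | step hp hp' ih =>
    rw [sideBranch_iff hM hp]
    rintro (⟨rfl, -⟩ | h)
    · exact hp'.ne hM hs rfl
    · exact ih h

variable (M w s) in
/-- A token at level `i` lies on the outline on the side `σ` of the run `s`: beside `s`, it faces
either side, and on `s`, it faces the side `σ`. -/
def OnOutline (σ : Bool) (i : ℕ) (t : Token M.Q) : Prop :=
  SideBranch M w s σ i t.1 ∨ t = (s i, σ)

namespace OnOutline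

theorem exists_edge (hs : OnewayRun M w s) (h : OnOutline M w s σ i t) :
    ∃ q, M.Edge (w i) t.1 q := by
  rcases h with (⟨hp, -⟩ | ⟨hp, -⟩) | rfl
  · exact ⟨_, hp⟩
  · exact ⟨_, hp⟩
  · exact ⟨_, hs.2 i⟩

theorem eq_of_fst_eq (hM : OnewayDet M) (hs : OnewayRun M w s) (h : OnOutline M w s σ i t)
    (h' : OnOutline M w s (!σ) i u) (htu : t.1 = u.1) : t = (s i, σ) ∧ u = (s i, !σ) := by
  rcases h with h | rfl
  · rcases h' with h' | rfl
    · exact (h.not_sideBranch_not hM hs (htu ▸ h')).elim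
    · exact (h.ne hM hs htu).elim
  · exact ⟨rfl, h'.resolve_left fun h' => h'.ne hM hs htu.symm⟩

theorem climb_iff (hM : OnewayDet M) (hs : OnewayRun M w s) (h : Climb (M.Edge (w i)) t t') :
    OnOutline M w s σ i t ↔ OnOutline M w s σ (i + 1) t' := by
  obtain ⟨p, b⟩ := t
  obtain ⟨q, b'⟩ := t'
  obtain ⟨hedge, hb, hlast⟩ := h
  obtain rfl : b' = b := hb
  simp only [OnOutline, sideBranch_iff hM hedge, Prod.mk.injEq]
  by_cases hq : q = s (i + 1)
  · have hle := hlast _ (hq ▸ hs.2 i)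
    have hinj := @signedRank_injective M.Q _ b' p (s i)
    have hbranch : ¬SideBranch M w s σ (i + 1) q := fun h => h.ne hM hs hq
    rcases Bool.eq_or_eq_not b' σ with rfl | rfl
    · grind
    · grind [signedRank_not]
  · have hp : p ≠ s i := fun hp => hq (Edge.rightUnique hM _ hedge (hp ▸ hs.2 i))
    simp only [hp, hq, false_and, false_or, or_false]

theorem swing (hM : OnewayDet M) (hs : OnewayRun M w s) (h : OnOutline M w s σ i t)
    (hswing : Swing (M.Edge (w i)) t t') : OnOutline M w s σ i t' := by
  obtain ⟨p, b⟩ := t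
  obtain ⟨p', _⟩ := t'
  obtain ⟨rfl, q, hedge, hedge', hlt, hnext⟩ := hswing
  simp only [OnOutline, sideBranch_iff hM hedge, sideBranch_iff hM hedge', Prod.mk.injEq] at h ⊢
  by_cases hq : q = s (i + 1)
  · have hle := hnext _ (hq ▸ hs.2 i)
    have hinj := @signedRank_injective M.Q _ b p' (s i)
    have hbranch : ¬SideBranch M w s σ (i + 1) q := fun h => h.ne hM hs hq
    rcases Bool.eq_or_eq_not b σ with rfl | rfl
    · grind
    · grind [signedRank_not]
  · have hp : p ≠ s i := fun hp => hq (Edge.rightUnique hM _ hedge (hp ▸ hs.2 i))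
    exact .inl (.inr ((h.resolve_right fun h => hp h.1).resolve_left fun h => hq h.1))

theorem flip (hs : OnewayRun M w s) (h : OnOutline M w s σ i t)
    (hflip : Flip (M.IsLeaf (letterBefore w i)) t t') : OnOutline M w s σ i t' := by
  obtain ⟨hleaf, rfl⟩ := hflip
  refine .inl (h.resolve_right ?_)
  rintro rfl
  cases i with
  | zero => exact hleaf hs.1
  | succ i => exact hleaf _ (hs.2 i)

theorem tokenMove (hM : OnewayDet M) (hs : OnewayRun M w s) (h : OnOutline M w s σ i t)
    (hmove : TokenMove M w i t j t') : OnOutline M w s σ j t' := by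
  cases hmove with
  | climb hclimb => exact (climb_iff hM hs hclimb).1 h
  | descend hclimb => exact (climb_iff hM hs hclimb).2 h
  | swing hswing => exact h.swing hM hs hswing
  | flip hflip => exact h.flip hs hflip
  | stay => exact h

end OnOutline

variable (M w s) in
/-- Both tokens lie on their outlines of the run `s`. -/
def OnOutlines (c : M.TokenPair × ℕ) : Prop :=
  OnOutline M w s false c.2 c.1.1 ∧ OnOutline M w s true c.2 c.1.2

namespace OnOutlines

theorem init (hs : OnewayRun M w s) : OnOutlines M w s (M.outlineAut.init, 0) :=
  ⟨.inr (hs.1 ▸ rfl), .inr (hs.1 ▸ rfl)⟩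

theorem stepVia (hM : OnewayDet M) (hs : OnewayRun M w s) (h : OnOutlines M w s c)
    (hstep : StepVia M.outlineAut w c d c') : OnOutlines M w s c' :=
  have ⟨h₁, h₂⟩ := TokenMove.of_stepVia hstep
  ⟨h.1.tokenMove hM hs h₁, h.2.tokenMove hM hs h₂⟩

theorem fst_eq_of_fst_eq (hM : OnewayDet M) (hs : OnewayRun M w s) (h : OnOutlines M w s c)
    (hc : c.1.1.1 = c.1.2.1) : c.1.1.1 = s c.2 :=
  congrArg Prod.fst (h.1.eq_of_fst_eq hM hs h.2 hc).1

theorem isForward_of_fst_eq (hM : OnewayDet M) (hs : OnewayRun M w s) (h : OnOutlines M w s c)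
    (hc : c.1.1.1 = c.1.2.1) : IsForward c.1 := by
  have ⟨h₁, h₂⟩ := h.1.eq_of_fst_eq hM hs h.2 hc
  rw [IsForward, h₁, h₂]
  exact Bool.false_ne_true

theorem exists_headLetter_eq (hM : OnewayDet M) (hs : OnewayRun M w s) (h : OnOutlines M w s c)
    (hc : 0 < c.2) :
    ∃ j, c.2 ≤ j + 1 ∧ headLetter M.outlineAut w c = some (w j) ∧
      (c.1.1.1 = c.1.2.1 → s j = c.1.1.1) := by
  by_cases hfwd : IsForward c.1
  · exact ⟨c.2, c.2.le_succ, headLetter_of_fwd (M := M.outlineAut) hfwd,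
      fun heq => (h.fst_eq_of_fst_eq hM hs heq).symm⟩
  · obtain ⟨j, hj⟩ := Nat.exists_eq_add_one.2 hc
    refine ⟨j, hj.le, ?_, fun heq => (hfwd (h.isForward_of_fst_eq hM hs heq)).elim⟩
    rw [headLetter_of_not_fwd (M := M.outlineAut) hfwd, hj, letterBefore]

theorem exists_ascent (hs : OnewayRun M w s) (h : OnOutlines M w s c) :
    ∃ s', Ascent (some (w c.2)) c.1 s' := by
  by_cases hturn : ∃ s', Turn (Swing (M.Edge (w c.2))) c.1 s'
  · exact hturn.imp fun _ => .swing
  have hswing := not_or.1 (mt Turn.exists_of_exists_rel hturn)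
  obtain ⟨p₁, hp₁⟩ := h.1.exists_edge hs
  obtain ⟨p₂, hp₂⟩ := h.2.exists_edge hs
  obtain ⟨t₁, ht₁⟩ := (exists_climb_or_exists_swing c.1.1.2 hp₁).resolve_right hswing.1
  obtain ⟨t₂, ht₂⟩ := (exists_climb_or_exists_swing c.1.2.2 hp₂).resolve_right hswing.2
  exact ⟨(t₁, t₂), .climb ht₁ ht₂⟩

theorem exists_descent (hM : OnewayDet M) (hs : OnewayRun M w s) (h : OnOutlines M w s c)
    (hc : ¬IsForward c.1) : ∃ s', Descent (letterBefore w c.2) c.1 s' := by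
  by_cases hturn : ∃ s', Turn (Flip (M.IsLeaf (letterBefore w c.2))) c.1 s'
  · exact hturn.imp fun _ => .flip
  have hflip := not_or.1 (mt Turn.exists_of_exists_rel hturn)
  have hleaf₁ : ¬M.IsLeaf (letterBefore w c.2) c.1.1.1 := fun h => hflip.1 ⟨_, h, rfl⟩
  have hleaf₂ : ¬M.IsLeaf (letterBefore w c.2) c.1.2.1 := fun h => hflip.2 ⟨_, h, rfl⟩
  obtain ⟨⟨t₁, t₂⟩, _ | i⟩ := c
  · have hmeet : t₁.1 = t₂.1 := (not_not.1 hleaf₁).trans (not_not.1 hleaf₂).symm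
    exact (hc (h.isForward_of_fst_eq hM hs hmeet)).elim
  · simp only [letterBefore, IsLeaf, not_forall, not_not] at hleaf₁ hleaf₂
    obtain ⟨u₁, hu₁⟩ := exists_climb_to t₁.2 hleaf₁.choose_spec
    obtain ⟨u₂, hu₂⟩ := exists_climb_to t₂.2 hleaf₂.choose_spec
    exact ⟨(u₁, u₂), .descend hu₁ hu₂⟩

theorem exists_stepVia (hM : OnewayDet M) (hs : OnewayRun M w s) (h : OnOutlines M w s c) :
    ∃ d c', StepVia M.outlineAut w c d c' := by
  suffices ∃ s', OutlineMove (headLetter M.outlineAut w c) c.1 s' by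
    obtain ⟨s', hs'⟩ := this
    obtain ⟨d, j, hd⟩ := Paper.exists_stepVia (M := M.outlineAut) hs'
    exact ⟨d, _, hd⟩
  by_cases hc : IsForward c.1
  · obtain ⟨s', hs'⟩ := h.exists_ascent hs
    exact ⟨s', fun _ => headLetter_of_fwd (M := M.outlineAut) hc ▸ hs', fun hc' => (hc' hc).elim⟩
  · obtain ⟨s', hs'⟩ := h.exists_descent hM hs hc
    exact ⟨s', fun hc' => (hc hc').elim,
      fun _ => headLetter_of_not_fwd (M := M.outlineAut) hc ▸ hs'⟩

end OnOutlines

theorem exists_isRun_of_onewayRun (hM : OnewayDet M) (hs : OnewayRun M w s) :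
    ∃ cfg tr, IsRun M.outlineAut w cfg tr := by
  obtain ⟨cfg, hinit, hcfg⟩ := exists_seq_of_forall_exists
    (I := fun _ => OnOutlines M w s) (r := fun _ c c' => ∃ d, StepVia M.outlineAut w c d c')
    (OnOutlines.init hs) fun _ c hc =>
      have ⟨d, c', hd⟩ := hc.exists_stepVia hM hs
      ⟨c', ⟨d, hd⟩, hc.stepVia hM hs hd⟩
  choose tr htr using hcfg
  exact ⟨cfg, tr, hinit, htr⟩

variable {cfg : ℕ → M.TokenPair × ℕ} {tr : ℕ → M.TokenPair × Option A × M.TokenPair}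

theorem onOutlines_of_isRun (hM : OnewayDet M) (hs : OnewayRun M w s)
    (h : IsRun M.outlineAut w cfg tr) (k : ℕ) : OnOutlines M w s (cfg k) := by
  induction k with
  | zero => exact h.1 ▸ OnOutlines.init hs
  | succ k ih => exact ih.stepVia hM hs (h.2 k)

theorem tendsto_pos_of_isRun (hM : OnewayDet M) (h : IsRun M.outlineAut w cfg tr) :
    Filter.Tendsto (fun k => (cfg k).2) Filter.atTop Filter.atTop :=
  h.tendsto_pos (reversible_outlineAut hM).2 marker_init_not_mem_outlineAut

theorem readsWhole_of_isRun (hM : OnewayDet M) (h : IsRun M.outlineAut w cfg tr) :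
    ReadsWhole M.outlineAut cfg := fun n =>
  ((tendsto_pos_of_isRun hM h).eventually_ge_atTop n).exists

theorem exists_outlineColor_le (hM : OnewayDet M) (hs : OnewayRun M w s)
    (h : IsRun M.outlineAut w cfg tr) (c : M.CIdx) {e : M.Q × A × M.Q}
    (he : InfOften (fun i => (s i, w i, s (i + 1))) e) :
    ∃ d, InfOften tr d ∧ outlineColor c d ≤ M.color c e := by
  choose k hpos hfwd h₁ h₂ using exists_visit hM h (readsWhole_of_isRun hM h) hs
  have hk : Filter.Tendsto k Filter.atTop Filter.atTop :=
    Filter.tendsto_atTop_mono (fun n => (hpos n).symm.le.trans (h.pos_le _)) Filter.tendsto_id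
  refine exists_infOften_of_frequently (b := some e.2.1) (hk.frequently ?_)
  refine (infOften_iff_frequently.1 he).mono fun n hn => ?_
  have htr := (stepVia_iff.1 (h.2 (k n))).1
  rw [headLetter_of_fwd (M := M.outlineAut) (hfwd n), hpos] at htr
  rw [htr, ← hn]
  exact ⟨rfl, outlineColor_le hM c (hs.2 n) (h₁ n) (h₂ n)⟩

theorem exists_color_le (hM : OnewayDet M) (hs : OnewayRun M w s)
    (h : IsRun M.outlineAut w cfg tr) (c : M.CIdx) {d : M.TokenPair × Option A × M.TokenPair}
    (hd : InfOften tr d) :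
    ∃ e, InfOften (fun i => (s i, w i, s (i + 1))) e ∧ M.color c e ≤ outlineColor c d := by
  have hvisits (n : ℕ) : ∃ j, n ≤ j ∧ d.2.1 = some (w j) ∧ (d.1.1.1 = d.1.2.1 → s j = d.1.1.1) := by
    obtain ⟨k, hk, hpos⟩ := ((infOften_iff_frequently.1 hd).and_eventually
      ((tendsto_pos_of_isRun hM h).eventually_ge_atTop (n + 1))).exists
    obtain ⟨j, hj, hletter, hstate⟩ :=
      (onOutlines_of_isRun hM hs h k).exists_headLetter_eq hM hs (Nat.zero_lt_of_lt hpos)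
    rw [← hk, (stepVia_iff.1 (h.2 k)).1]
    exact ⟨j, Nat.le_of_succ_le_succ (hpos.trans hj), hletter, hstate⟩
  obtain ⟨x, _ | a, y⟩ := d
  · obtain ⟨j, -, hletter, -⟩ := hvisits 0
    exact nomatch hletter
  · refine exists_infOften_of_frequently (b := a)
      ((Filter.frequently_atTop.2 hvisits).mono fun j ⟨hletter, hstate⟩ => ?_)
    obtain rfl := Option.some.inj hletter
    exact ⟨rfl, color_le_outlineColor c (hs.2 j) hstate⟩

theorem parityCond_iff (hM : OnewayDet M) (hs : OnewayRun M w s)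
    (h : IsRun M.outlineAut w cfg tr) :
    ParityCond M.outline tr ↔ OnewayParityCond M fun i => (s i, w i, s (i + 1)) :=
  forall_congr' fun c => iff_of_eq <| congrArg Even <| sInf_eq_sInf_of_forall_exists_le
    (fun _ => exists_color_le hM hs h c) (fun _ => exists_outlineColor_le hM hs h c)

theorem accepts_outline_iff (hM : OnewayDet M) : M.outline.Accepts w ↔ M.Accepts w := by
  constructor
  · rintro ⟨cfg, tr, hrun, hread, hparity⟩
    obtain ⟨s, hs⟩ := exists_onewayRun_of_isRun hM hrun hread
    exact ⟨s, hs, (parityCond_iff hM hs hrun).1 hparity⟩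
  · rintro ⟨s, hs, hparity⟩
    obtain ⟨cfg, tr, hrun⟩ := exists_isRun_of_onewayRun hM hs
    exact ⟨cfg, tr, hrun, readsWhole_of_isRun hM hrun, (parityCond_iff hM hs hrun).2 hparity⟩

end Outlines

end OnewayAut

theorem odba_to_rba_general {A : Type} {M : OnewayAut A} (hdet : OnewayDet M) :
    ∃ M' : ParityAut A,
      Reversible M'.toTwoWayAut ∧
      Fintype.card M'.Q ≤ 4 * Fintype.card M.Q ^ 2 ∧
      (∀ w : ℕ → A, M'.Accepts w ↔ M.Accepts w) :=
  ⟨M.outline, OnewayAut.reversible_outlineAut hdet, OnewayAut.card_outline.le,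
    fun _ => OnewayAut.accepts_outline_iff hdet⟩

/-- Every deterministic one-way parity automaton `M` with `n` states is
equivalent (same accepted language of infinite words) to a reversible two-way parity
automaton `M'` with at most `4n²` states. -/
theorem odba_to_rba (A : Type) [Fintype A] (M : OnewayAut A) (n : ℕ)
    (hdet : OnewayDet M) (hn : Fintype.card M.Q = n) :
    ∃ M' : ParityAut A,
      Reversible M'.toTwoWayAut ∧
      Fintype.card M'.Q ≤ 4 * n ^ 2 ∧
      (∀ w : ℕ → A, M'.Accepts w ↔ M.Accepts w) :=
  hn ▸ odba_to_rba_general hdet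

end Paper
end

section
/- Let T be a copyless parity streaming string transducer with n states, m registers and output alphabet B. Then there exist a deterministic one-way parity transducer D with n states (with the same underlying one-way parity automaton as T, whose output alphabet is the set of copyless substitutions of the registers of T into B, and which outputs on each transition the substitution that T applies) and a reversible two-way transducer F with 2m states and an empty set of coloring functions, such that ⟦T⟧ = ⟦F⟧ ∘ ⟦D⟧ as partial functions from A^ω to B^ω. -/
namespace Paper

/-!
Two states suffice per register `r`. Entering `r` backward at position `i`, the evaluator spells out
the content of `r` after the first `i` substitutions and leaves `r` forward at position `i` again.
To do so at position `i + 1` it reads the letter `σ`, outputs the letters of `σ r` and evaluates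
each register met in `σ r` recursively at position `i`; at position `0` all registers are empty and
it bounces on the end-marker. By copylessness, the register just left determines which image `σ r`
is being traversed, and where, so no stack is needed; reversing all the images exchanges successors
and predecessors, so determinism also yields codeterminism. Since updates
only append to the output register, the evaluator reaches each new position in its initial state,
having output exactly the content of that register.
-/

section Limits

variable {C : Type}

/-- The infinite word `x` is the limit of the finite words `u 0, u 1, …`: each of them is a prefix
of `x` and their lengths are unbounded. -/
def IsLimitOf (x : ℕ → C) (u : ℕ → List C) : Prop :=
  (∀ n, IsPrefixOf (u n) x) ∧ ∀ m, ∃ n, m ≤ (u n).length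

theorem IsPrefixOf.of_prefix {l l' : List C} {x : ℕ → C} (h : IsPrefixOf l' x) (hl : l <+: l') :
    IsPrefixOf l x := by
  intro i hi
  rw [← h i (hi.trans_le hl.length_le)]
  exact hl.getElem hi

theorem isLimitOf_iff_of_cofinal {u v : ℕ → List C} (hu : ∀ ⦃n k⦄, n ≤ k → u n <+: u k)
    (huv : ∀ n, ∃ k, n ≤ k ∧ u k = v n) (x : ℕ → C) : IsLimitOf x u ↔ IsLimitOf x v := by
  choose k hk huk using huv
  constructor
  · rintro ⟨hpre, hlen⟩
    refine ⟨fun n => huk n ▸ hpre (k n), fun m => ?_⟩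
    obtain ⟨n, hn⟩ := hlen m
    exact ⟨n, huk n ▸ hn.trans (hu (hk n)).length_le⟩
  · rintro ⟨hpre, hlen⟩
    refine ⟨fun n => (hpre n).of_prefix (huk n ▸ hu (hk n)), fun m => ?_⟩
    obtain ⟨n, hn⟩ := hlen m
    exact ⟨k n, (huk n).symm ▸ hn⟩

theorem prefixCat_prefix_of_le (f : ℕ → List C) ⦃n k : ℕ⦄ (h : n ≤ k) :
    prefixCat f n <+: prefixCat f k :=
  Nat.rel_of_forall_rel_succ_of_le (· <+: ·) (fun n => List.prefix_append _ (f n)) h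

theorem prefixCat_singleton (f : ℕ → C) (n : ℕ) :
    prefixCat (fun i => [f i]) n = (List.range n).map f := by
  induction n with
  | zero => rfl
  | succ n ih => simp [prefixCat, ih, List.range_succ]

theorem flattenTo_singleton_iff {f x : ℕ → C} : FlattenTo (fun i => [f i]) x ↔ x = f := by
  simp only [FlattenTo, prefixCat_singleton]
  constructor
  · rintro ⟨hpre, -⟩
    funext i
    simpa using (hpre (i + 1) i (by simp)).symm
  · rintro rfl
    exact ⟨fun n i hi => by simp, fun m => ⟨m, by simp⟩⟩

end Limits

section Runs

variable {A B : Type}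

theorem StepVia.unique {M : TwoWayAut A} (hM : Deterministic M) {w : ℕ → A} {c d d' : M.Q × ℕ}
    {t t' : M.Q × Option A × M.Q} (h : StepVia M w c t d) (h' : StepVia M w c t' d') :
    t = t' ∧ d = d' := by
  obtain ⟨p, a, q⟩ := t
  obtain ⟨p', a', q'⟩ := t'
  obtain ⟨_, i⟩ := d
  obtain ⟨_, i'⟩ := d'
  obtain ⟨hΔ, rfl, rfl, hmove⟩ := h
  obtain ⟨hΔ', rfl, rfl, hmove'⟩ := h'
  have letter_eq : a = a' := by grind
  subst letter_eq
  obtain rfl : q = q' := hM _ _ _ _ hΔ hΔ'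
  have position_eq : i = i' := by grind
  rw [position_eq]
  exact ⟨rfl, rfl⟩

theorem exists_isRun_of_invariant {M : TwoWayAut A} {w : ℕ → A} (P : M.Q × ℕ → Prop)
    (hinit : P (M.init, 0)) (hstep : ∀ c, P c → ∃ t d, StepVia M w c t d ∧ P d) :
    ∃ cfg tr, IsRun M w cfg tr := by
  choose t d hvia hP using hstep
  let cfg : ℕ → {c // P c} := fun n => n.rec ⟨_, hinit⟩ fun _ c => ⟨d c c.2, hP c c.2⟩
  exact ⟨fun n => (cfg n).1, fun n => t (cfg n).1 (cfg n).2, rfl,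
    fun n => hvia (cfg n).1 (cfg n).2⟩

/-- `T.Path w c l d`: the transducer `T` has a finite run on `w` from `c` to `d` with output `l`. -/
inductive TwoWayTrans.Path (T : TwoWayTrans A B) (w : ℕ → A) :
    T.Q × ℕ → List B → T.Q × ℕ → Prop
  | refl (c) : T.Path w c [] c
  | head {c t d l e} : StepVia T.toTwoWayAut w c t d → T.Path w d l e →
      T.Path w c (T.out t ++ l) e

variable {T : TwoWayTrans A B} {w : ℕ → A}

namespace TwoWayTrans.Path

theorem single {c d : T.Q × ℕ} {t : T.Q × Option A × T.Q} (h : StepVia T.toTwoWayAut w c t d) :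
    T.Path w c (T.out t) d := by
  simpa using head h (refl d)

theorem trans {c d e : T.Q × ℕ} {l l' : List B} (h : T.Path w c l d) (h' : T.Path w d l' e) :
    T.Path w c (l ++ l') e := by
  induction h with
  | refl c => exact h'
  | head hs _ ih => rw [List.append_assoc]; exact head hs (ih h')

theorem exists_step_of_ne {c e : T.Q × ℕ} {l : List B} (h : T.Path w c l e) (hne : c ≠ e) :
    ∃ t d l', StepVia T.toTwoWayAut w c t d ∧ T.Path w d l' e := by
  cases h with
  | refl => exact absurd rfl hne
  | head hs hp => exact ⟨_, _, _, hs, hp⟩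

end TwoWayTrans.Path

theorem exists_isRun_of_path {q : ℕ → T.Q} (hinit : q 0 = T.init)
    (hpath : ∀ i, ∃ l, T.Path w (q i, i) l (q (i + 1), i + 1)) :
    ∃ cfg tr, IsRun T.toTwoWayAut w cfg tr := by
  refine exists_isRun_of_invariant (fun c => ∃ i l, T.Path w c l (q i, i))
    ⟨0, [], hinit ▸ .refl _⟩ ?_
  rintro c ⟨i, l, hl⟩
  obtain ⟨j, l, hl, hne⟩ : ∃ j l, T.Path w c l (q j, j) ∧ c ≠ (q j, j) := by
    by_cases hc : c = (q i, i)
    · obtain ⟨l', hl'⟩ := hpath i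
      exact ⟨i + 1, l', hc ▸ hl', by simp [hc]⟩
    · exact ⟨i, l, hl, hc⟩
  obtain ⟨t, d, l', hstep, hl'⟩ := hl.exists_step_of_ne hne
  exact ⟨t, d, hstep, j, l', hl'⟩

section Deterministic

variable (hT : Deterministic T.toTwoWayAut) {cfg : ℕ → T.Q × ℕ} {tr : ℕ → T.Q × Option A × T.Q}
  (hrun : IsRun T.toTwoWayAut w cfg tr)

include hT hrun

theorem IsRun.exists_follow_path {c d : T.Q × ℕ} {l : List B} (hp : T.Path w c l d) {k : ℕ}
    (hk : cfg k = c) :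
    ∃ k', k ≤ k' ∧ cfg k' = d ∧
      prefixCat (fun i => T.out (tr i)) k' = prefixCat (fun i => T.out (tr i)) k ++ l := by
  induction hp generalizing k with
  | refl c => exact ⟨k, le_rfl, hk, by simp⟩
  | head hs _ ih =>
    obtain ⟨htr, hcfg⟩ := hs.unique hT (hk ▸ hrun.2 k)
    obtain ⟨k', hle, hk', hout⟩ := ih hcfg.symm
    exact ⟨k', by omega, hk', by simp [hout, htr, prefixCat]⟩

theorem IsRun.exists_checkpoint {q : ℕ → T.Q} (hinit : q 0 = T.init) {u : ℕ → List B}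
    (hu : u 0 = [])
    (hpath : ∀ i, ∃ l, T.Path w (q i, i) l (q (i + 1), i + 1) ∧ u (i + 1) = u i ++ l) (i : ℕ) :
    ∃ k, i ≤ k ∧ cfg k = (q i, i) ∧ prefixCat (fun i => T.out (tr i)) k = u i := by
  induction i with
  | zero => exact ⟨0, le_rfl, hinit ▸ hrun.1, hu.symm⟩
  | succ i ih =>
    obtain ⟨k, hik, hk, hout⟩ := ih
    obtain ⟨l, hl, hul⟩ := hpath i
    obtain ⟨k', hkk', hk', hout'⟩ := hrun.exists_follow_path hT hl hk
    have hne : k ≠ k' := fun h => by simp [← h, hk] at hk'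
    exact ⟨k', by omega, hk', by rw [hout', hout, hul]⟩

end Deterministic

theorem TwoWayTrans.realizes_iff_isLimitOf (hT : Deterministic T.toTwoWayAut) [IsEmpty T.CIdx]
    {q : ℕ → T.Q} (hinit : q 0 = T.init) {u : ℕ → List B} (hu : u 0 = [])
    (hpath : ∀ i, ∃ l, T.Path w (q i, i) l (q (i + 1), i + 1) ∧ u (i + 1) = u i ++ l)
    (x : ℕ → B) : T.Realizes w x ↔ IsLimitOf x u := by
  have flattenTo_iff {cfg tr} (hrun : IsRun T.toTwoWayAut w cfg tr) :
      FlattenTo (fun i => T.out (tr i)) x ↔ IsLimitOf x u :=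
    isLimitOf_iff_of_cofinal (prefixCat_prefix_of_le _) (fun i =>
      let ⟨k, hik, _, hout⟩ := hrun.exists_checkpoint hT hinit hu hpath i
      ⟨k, hik, hout⟩) x
  constructor
  · rintro ⟨cfg, tr, hrun, -, -, hflat⟩
    exact (flattenTo_iff hrun).1 hflat
  · intro hlim
    obtain ⟨cfg, tr, hrun⟩ :=
      exists_isRun_of_path hinit fun i => let ⟨l, hl, _⟩ := hpath i; ⟨l, hl⟩
    refine ⟨cfg, tr, hrun, fun n => ?_, isEmptyElim, (flattenTo_iff hrun).2 hlim⟩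
    obtain ⟨k, -, hk, -⟩ := hrun.exists_checkpoint hT hinit hu hpath n
    exact ⟨k, by rw [hk]⟩

end Runs

section Substitutions

variable {R C : Type}

theorem occ_eq_count [DecidableEq C] (a : C) (l : List C) : occ a l = l.count a :=
  List.countP_congr fun x _ => by simp

theorem append_cons_inj_of_occ_le_one {a : C} {u u' v v' : List C}
    (h : occ a (u ++ a :: v) ≤ 1) (e : u ++ a :: v = u' ++ a :: v') : u = u' ∧ v = v' := by
  classical
  simp only [occ_eq_count, List.count_append, List.count_cons_self] at h
  have hu : a ∉ u := List.count_eq_zero.1 (by omega)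
  have hv : a ∉ v := List.count_eq_zero.1 (by omega)
  obtain ⟨hu_eq, -, hv_eq⟩ := (List.append_cons_inj_of_notMem hu hv).1 e
  exact ⟨hu_eq, hv_eq⟩

theorem Copyless.reverse [Fintype R] {σ : R → List (R ⊕ C)} (hσ : Copyless σ) :
    Copyless fun r => (σ r).reverse := by
  simpa only [Copyless, occ, List.countP_reverse] using hσ

theorem Copyless.occ_le_one [Fintype R] {σ : R → List (R ⊕ C)} (hσ : Copyless σ) (s r : R) :
    occ (Sum.inl s) (σ r) ≤ 1 :=
  (Finset.single_le_sum (f := fun r => occ (Sum.inl s) (σ r)) (fun _ _ => Nat.zero_le _)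
    (Finset.mem_univ r)).trans (hσ s)

theorem Copyless.occurrence_unique [Fintype R] {σ : R → List (R ⊕ C)} (hσ : Copyless σ)
    {s r r' : R} {u u' v v' : List (R ⊕ C)} (h : σ r = u ++ Sum.inl s :: v)
    (h' : σ r' = u' ++ Sum.inl s :: v') : r = r' ∧ u = u' ∧ v = v' := by
  classical
  have image_eq : r = r' := by
    by_contra hne
    have hsum := (Finset.add_le_sum (f := fun r => occ (Sum.inl s) (σ r))
      (fun _ _ => Nat.zero_le _) (Finset.mem_univ r) (Finset.mem_univ r') hne).trans (hσ s)
    simp only [h, h', occ_eq_count, List.count_append, List.count_cons_self] at hsum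
    omega
  subst image_eq
  exact ⟨rfl, append_cons_inj_of_occ_le_one (h ▸ hσ.occ_le_one s r) (h.symm.trans h')⟩

/-- The register contents after the substitutions `σ 0, …, σ (i - 1)`, starting from empty
registers. -/
def contents (σ : ℕ → R → List (R ⊕ C)) : ℕ → R → List C
  | 0 => fun _ => []
  | i + 1 => fun r => subApply (contents σ i) (σ i r)

end Substitutions

section Moves

variable {R C : Type}

/-- The state with the same register and the opposite direction. Here `(r, false)` is the backward
state entering the register `r`, and `(r, true)` the forward state leaving it. -/
def mirror (p : R × Bool) : R × Bool := (p.1, !p.2)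

@[simp]
theorem mirror_mirror (p : R × Bool) : mirror (mirror p) = p := by simp [mirror]

theorem mirror_injective : Function.Injective (mirror : R × Bool → R × Bool) :=
  Function.LeftInverse.injective mirror_mirror

/-- In a traversal of the image of `r`, when the remaining part `v` does not start with an output
letter, `q` is the next state: enter the first register of `v`, or leave `r` if `v` is empty. -/
inductive StopsAt (r : R) : List (R ⊕ C) → R × Bool → Prop
  | nil : StopsAt r [] (r, true)
  | cons (s v) : StopsAt r (Sum.inl s :: v) (s, false)

/-- The moves `p → q` of the evaluator on the letter `σ`, with output `b`: the word `b` lies in an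
image `σ r` between two consecutive registers or ends of that image, to which `p` and `q`
correspond. The part `u` of the image before `b` is reversed, so that `p` is described, up to
`mirror`, in the same way as `q`. -/
def Move (σ : R → List (R ⊕ C)) (p : R × Bool) (b : List C) (q : R × Bool) : Prop :=
  ∃ r u v, σ r = u.reverse ++ (b.map Sum.inr ++ v) ∧ StopsAt r u (mirror p) ∧ StopsAt r v q

theorem Move.reverse {σ : R → List (R ⊕ C)} {p q : R × Bool} {b : List C} (h : Move σ p b q) :
    Move (fun r => (σ r).reverse) (mirror q) b.reverse (mirror p) := by
  obtain ⟨r, u, v, hσ, hp, hq⟩ := h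
  exact ⟨r, v, u, by simp [hσ], by simpa using hq, hp⟩

theorem StopsAt.unique_of_append {r : R} {b b' : List C} {v v' : List (R ⊕ C)} {q q' : R × Bool}
    (h : StopsAt r v q) (h' : StopsAt r v' q') (e : b.map Sum.inr ++ v = b'.map Sum.inr ++ v') :
    b = b' ∧ q = q' := by
  induction b generalizing b' with
  | nil => cases b' <;> cases h <;> cases h' <;> simp_all
  | cons c b ih =>
    cases b' with
    | nil => cases h' <;> simp at e
    | cons c' b' =>
      obtain ⟨rfl, htail⟩ : c = c' ∧ b.map Sum.inr ++ v = b'.map Sum.inr ++ v' := by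
        simpa using e
      simpa using ih htail

variable [Fintype R]

theorem StopsAt.suffix_unique {σ : R → List (R ⊕ C)} (hσ : Copyless σ) {q : R × Bool} {r r' : R}
    {u u' v v' : List (R ⊕ C)} (h : StopsAt r u q) (h' : StopsAt r' u' q)
    (e : σ r = u.reverse ++ v) (e' : σ r' = u'.reverse ++ v') :
    r = r' ∧ v = v' := by
  obtain _ | ⟨s, u⟩ := h
  · cases h'
    exact ⟨rfl, e.symm.trans e'⟩
  · obtain _ | ⟨_, u'⟩ := h'
    rw [List.reverse_cons, List.append_assoc] at e e'
    obtain ⟨hr, -, hv⟩ := hσ.occurrence_unique e e'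
    exact ⟨hr, hv⟩

theorem Move.det {σ : R → List (R ⊕ C)} (hσ : Copyless σ) {p q q' : R × Bool} {b b' : List C}
    (h : Move σ p b q) (h' : Move σ p b' q') : b = b' ∧ q = q' := by
  obtain ⟨r, u, v, e, hp, hq⟩ := h
  obtain ⟨r', u', v', e', hp', hq'⟩ := h'
  obtain ⟨rfl, hv⟩ := hp.suffix_unique hσ hp' e e'
  exact hq.unique_of_append hq' hv

theorem Move.codet {σ : R → List (R ⊕ C)} (hσ : Copyless σ) {p p' q : R × Bool} {b b' : List C}
    (h : Move σ p b q) (h' : Move σ p' b' q) : p = p' :=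
  mirror_injective (h.reverse.det hσ.reverse h'.reverse).2

end Moves

section Evaluator

variable {R C : Type} [Fintype R]

/-- The copyless substitutions, which form the input alphabet of the evaluator. -/
abbrev CopylessSubst (R C : Type) [Fintype R] : Type := {σ : R → List (R ⊕ C) // Copyless σ}

/-- The transitions of the evaluator: its moves on a substitution, and the bounces on the
end-marker, which evaluate a register to the empty word. -/
inductive EvaluatorTransition :
    R × Bool → Option (CopylessSubst R C) → R × Bool → Prop
  | move {σ p b q} : Move σ.1 p b q → EvaluatorTransition p (some σ) q
  | bounce (r) : EvaluatorTransition (r, false) none (r, true)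

/-- The two-way transducer, without acceptance condition, that reads an infinite word of copyless
substitutions and outputs the successive contents of the register `o`. The output `b` on a letter is
chosen such that `Move σ p b q`; by `Move.det` there is at most one such `b`. -/
noncomputable abbrev evaluator (o : R) : TwoWayTrans (CopylessSubst R C) C where
  Q := R × Bool
  finQ := inferInstance
  fwd p := p.2 = true
  init := (o, true)
  init_fwd := rfl
  Δ := {t | EvaluatorTransition t.1 t.2.1 t.2.2}
  marker := by rintro _ _ ⟨⟩; simp
  CIdx := Empty
  finC := inferInstance
  color := nofun
  out
    | (p, some σ, q) => Classical.epsilon fun b => Move σ.1 p b q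
    | (_, none, _) => []

theorem evaluator_out_eq (o : R) {σ : CopylessSubst R C} {p q : R × Bool} {b : List C}
    (h : Move σ.1 p b q) : (evaluator o).out (p, some σ, q) = b :=
  ((Classical.epsilon_spec (p := fun b => Move σ.1 p b q) ⟨b, h⟩).det σ.2 h).1

theorem evaluator_reversible (o : R) : Reversible (evaluator (C := C) o).toTwoWayAut := by
  constructor
  · rintro p a q q' (h | r) h'
    · obtain ⟨h'⟩ := h'
      exact (h.det (Subtype.property _) h').2
    · cases h'
      rfl
  · rintro p p' a q (h | r) h'
    · obtain ⟨h'⟩ := h'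
      exact h.codet (Subtype.property _) h'
    · cases h'
      rfl

/-- The position at which the state `p` reads the letter number `i`: backward states read the letter
to their left. The position reached when arriving in `q` from that letter is the one where
`mirror q` would read it. -/
def readPosition (p : R × Bool) (i : ℕ) : ℕ := if p.2 then i else i + 1

variable (o : R) (y : ℕ → CopylessSubst R C)

theorem evaluator_path_of_move {p q : R × Bool} {b : List C} {i : ℕ} (h : Move (y i).1 p b q) :
    (evaluator o).Path y (p, readPosition p i) b (q, readPosition (mirror q) i) := by
  have hstep : StepVia (evaluator o).toTwoWayAut y (p, readPosition p i) (p, some (y i), q)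
      (q, readPosition (mirror q) i) := by
    refine ⟨.move h, rfl, rfl, ?_⟩
    obtain ⟨p, _ | _⟩ := p <;> obtain ⟨q, _ | _⟩ := q <;> simp [readPosition, mirror]
  exact evaluator_out_eq o h ▸ .single hstep

theorem evaluator_path_of_suffix {i : ℕ} {ν : R → List C}
    (hν : ∀ s, (evaluator o).Path y ((s, false), i) (ν s) ((s, true), i)) {r : R}
    {u v : List (R ⊕ C)} {b : List C} {p : R × Bool}
    (e : (y i).1 r = u.reverse ++ (b.map Sum.inr ++ v)) (hp : StopsAt r u (mirror p)) :
    (evaluator o).Path y (p, readPosition p i) (b ++ subApply ν v) ((r, true), i + 1) := by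
  induction v generalizing u b p with
  | nil =>
    simpa [subApply, readPosition, mirror] using
      evaluator_path_of_move o y ⟨r, u, [], e, hp, .nil⟩
  | cons a v ih =>
    cases a with
    | inl s =>
      have toRegister := evaluator_path_of_move o y ⟨r, u, _, e, hp, .cons s v⟩
      have fromRegister := ih (u := Sum.inl s :: ((b.map Sum.inr).reverse ++ u)) (b := [])
        (p := (s, true)) (by simp [e]) (.cons s _)
      exact toRegister.trans ((hν s).trans fromRegister)
    | inr c => simpa [subApply] using ih (b := b ++ [c]) (by simp [e]) hp

theorem evaluator_path_register (i : ℕ) (r : R) :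
    (evaluator o).Path y ((r, false), i) (contents (fun i => (y i).1) i r) ((r, true), i) := by
  induction i generalizing r with
  | zero =>
    have hstep : StepVia (evaluator o).toTwoWayAut y ((r, false), 0) ((r, false), none, (r, true))
        ((r, true), 0) := ⟨.bounce r, rfl, rfl, .inr (.inr ⟨by simp, rfl, rfl, rfl⟩)⟩
    exact .single hstep
  | succ i ih =>
    exact evaluator_path_of_suffix o y ih (u := []) (b := []) (p := (r, false)) rfl .nil

theorem evaluator_path_init {i : ℕ} {γ : List (R ⊕ C)} (h : (y i).1 o = Sum.inl o :: γ) :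
    (evaluator o).Path y ((o, true), i) (subApply (contents (fun i => (y i).1) i) γ)
      ((o, true), i + 1) :=
  evaluator_path_of_suffix o y (evaluator_path_register o y i) (u := [Sum.inl o]) (b := [])
    (p := (o, true)) h (.cons o [])

theorem evaluator_realizes_iff (hy : ∀ i, ∃ γ, (y i).1 o = Sum.inl o :: γ) (x : ℕ → C) :
    (evaluator o).Realizes y x ↔ IsLimitOf x fun i => contents (fun i => (y i).1) i o := by
  refine TwoWayTrans.realizes_iff_isLimitOf (q := fun _ => (o, true)) (evaluator_reversible o).1
    rfl rfl (fun i => ?_) x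
  obtain ⟨γ, hγ⟩ := hy i
  exact ⟨_, evaluator_path_init o y hγ, by simp [contents, hγ, subApply]⟩

end Evaluator

section Decomposition

variable {A B : Type} (T : CPSST A B)

/-- The word of substitutions that `T` applies along the state sequence `s` on the word `w`. -/
def substWord (w : ℕ → A) (s : ℕ → T.Q) (i : ℕ) : CopylessSubst T.R B :=
  ⟨T.upd (s i, w i, s (i + 1)), T.copyless _⟩

theorem regVal_eq_contents (w : ℕ → A) (s : ℕ → T.Q) (i : ℕ) :
    regVal T w s i = contents (fun i => (substWord T w s i).1) i := by
  induction i with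
  | zero => rfl
  | succ i ih => simp only [regVal, contents, ih, substWord]

theorem enrich_realizes_iff (w : ℕ → A) (y : ℕ → CopylessSubst T.R B) :
    (enrich T).Realizes w y ↔ ∃ s, OnewayRun T.toOnewayAut w s ∧
      OnewayParityCond T.toOnewayAut (fun i => (s i, w i, s (i + 1))) ∧ y = substWord T w s :=
  exists_congr fun _ => and_congr_right' (and_congr_right' flattenTo_singleton_iff)

theorem CPSST.realizes_iff_exists_enrich_realizes (w : ℕ → A) (x : ℕ → B) :
    T.Realizes w x ↔ ∃ y, (enrich T).Realizes w y ∧ (evaluator T.outReg).Realizes y x := by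
  have realizes_substWord (s : ℕ → T.Q) :
      (evaluator T.outReg).Realizes (substWord T w s) x ↔
        IsLimitOf x fun i => regVal T w s i T.outReg := by
    simp only [evaluator_realizes_iff T.outReg (substWord T w s) (fun _ => T.out_form _),
      regVal_eq_contents]
  simp only [enrich_realizes_iff]
  constructor
  · rintro ⟨s, hrun, hpar, hlim⟩
    exact ⟨_, ⟨s, hrun, hpar, rfl⟩, (realizes_substWord s).2 hlim⟩
  · rintro ⟨_, ⟨s, hrun, hpar, rfl⟩, heval⟩
    exact ⟨s, hrun, hpar, (realizes_substWord s).1 heval⟩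

end Decomposition

theorem cpsst_decomposition_general {A B : Type} (T : CPSST A B) (n m : ℕ)
    (hn : Fintype.card T.Q = n) (hm : Fintype.card T.R = m) :
    ∃ F : TwoWayTrans {σ : T.R → List (T.R ⊕ B) // Copyless σ} B,
      Reversible F.toTwoWayAut ∧
      Fintype.card F.Q = 2 * m ∧
      IsEmpty F.CIdx ∧
      Fintype.card (enrich T).Q = n ∧
      (∀ w x, T.Realizes w x ↔ ∃ y, (enrich T).Realizes w y ∧ F.Realizes y x) := by
  have card_states : Fintype.card (T.R × Bool) = 2 * m := by
    rw [Fintype.card_prod, hm, Fintype.card_bool, mul_comm]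
  exact ⟨evaluator T.outReg, evaluator_reversible _, card_states, inferInstanceAs (IsEmpty Empty),
    hn, T.realizes_iff_exists_enrich_realizes⟩

/-- For every copyless parity SST `T` with `n` states and `m` registers,
`⟦T⟧ = ⟦F⟧ ∘ ⟦D⟧` where `D = enrich T` is the deterministic one-way parity transducer with
the same underlying automaton as `T` (hence `n` states) whose output alphabet is the set of
copyless substitutions and which outputs on each transition the substitution `T` applies,
and `F` is a reversible two-way transducer with `2m` states and no coloring functions. -/
theorem cpsst_decomposition (A B : Type) [Fintype A] [Fintype B]
    (T : CPSST A B) (n m : ℕ)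
    (hdet : OnewayDet T.toOnewayAut)
    (hn : Fintype.card T.Q = n) (hm : Fintype.card T.R = m) :
    ∃ F : TwoWayTrans {σ : T.R → List (T.R ⊕ B) // Copyless σ} B,
      Reversible F.toTwoWayAut ∧
      Fintype.card F.Q = 2 * m ∧
      IsEmpty F.CIdx ∧
      Fintype.card (enrich T).Q = n ∧
      (∀ w x, T.Realizes w x ↔ ∃ y, (enrich T).Realizes w y ∧ F.Realizes y x) :=
  cpsst_decomposition_general T n m hn hm

end Paper
end
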